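/- For every k ≥ 1 and every graph G ∈ D̂_k, every edge vw of G has a low-degree common neighbour; that is, there is a vertex x of G, distinct from v and w, adjacent to both v and w, whose degree equals the minimum degree k+1 of G. -/

import Mathlib

open SimpleGraph

/-- The degree of a vertex in a finite simple graph. -/
noncomputable def degC {V : Type} [Fintype V] (G : SimpleGraph V) (v : V) : ℕ := by
  classical exact G.degree v

/-- The minimum degree of a finite simple graph. -/
noncomputable def minDegC {V : Type} [Fintype V] (G : SimpleGraph V) : ℕ := by
  classical exact G.minDegree

/-- `H` is a minor of `G`: there is a family of nonempty, pairwise disjoint,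
connected branch sets, one for each vertex of `H`, such that every edge of `H`
is realised by an edge of `G` between the corresponding branch sets. -/
def IsMinorOf {W V : Type} (H : SimpleGraph W) (G : SimpleGraph V) : Prop :=
  ∃ B : W → Set V,
    (∀ w, (B w).Nonempty) ∧
    (∀ u w : W, u ≠ w → Disjoint (B u) (B w)) ∧
    (∀ w, (G.induce (B w)).Connected) ∧
    (∀ ⦃u w : W⦄, H.Adj u w → ∃ a ∈ B u, ∃ b ∈ B w, G.Adj a b)

/-- `H` is a proper minor of `G`: a minor that is not isomorphic to `G`. -/
def IsProperMinorOf {W V : Type} (H : SimpleGraph W) (G : SimpleGraph V) : Prop :=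
  IsMinorOf H G ∧ ¬ Nonempty (H ≃g G)

/-- `G ∈ D_k`: every minor of `G` has minimum degree at most `k`. -/
def MemD (k : ℕ) {V : Type} (G : SimpleGraph V) : Prop :=
  ∀ (W : Type) [Fintype W] (H : SimpleGraph W), IsMinorOf H G → minDegC H ≤ k

/-- `G ∈ D̂_k`: `G ∉ D_k` but every proper minor of `G` is in `D_k`. -/
def MemDHat (k : ℕ) {V : Type} (G : SimpleGraph V) : Prop :=
  ¬ MemD k G ∧ ∀ (W : Type) [Fintype W] (H : SimpleGraph W), IsProperMinorOf H G → MemD k H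

theorem degC_eq_ncard {V : Type} [Fintype V] (G : SimpleGraph V) (v : V) :
    degC G v = (G.neighborSet v).ncard := by
  classical
  unfold degC
  rw [← G.card_neighborSet_eq_degree v, Set.ncard_eq_toFinset_card', Set.toFinset_card]

theorem ncard_le_degC {V : Type} [Fintype V] {p : V → Prop} [Fintype {x // p x}]
    (H : SimpleGraph {x // p x}) (x : {x // p x}) (A : Set V)
    (hA : ∀ y ∈ A, ∃ hy : p y, H.Adj x ⟨y, hy⟩) : A.ncard ≤ degC H x := by
  rw [degC_eq_ncard, ← Set.ncard_image_of_injective _ Subtype.val_injective]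
  refine Set.ncard_le_ncard ?_ (Set.toFinite _)
  intro y hy
  obtain ⟨h, h'⟩ := hA y hy
  exact ⟨⟨y, h⟩, h', rfl⟩

theorem minDegC_le_degC {V : Type} [Fintype V] (G : SimpleGraph V) (v : V) :
    minDegC G ≤ degC G v := by
  classical
  exact G.minDegree_le_degree v

theorem exists_degC_eq_minDegC {V : Type} [Fintype V] [Nonempty V] (G : SimpleGraph V) :
    ∃ v, degC G v = minDegC G := by
  classical
  obtain ⟨v, hv⟩ := G.exists_minimal_degree_vertex
  exact ⟨v, hv.symm⟩

theorem connected_induce_singleton {V : Type} (G : SimpleGraph V) (x : V) :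
    (G.induce ({x} : Set V)).Connected :=
  .of_subsingleton

theorem connected_induce_insert {V : Type} {G : SimpleGraph V} {u : V} {T : Set V}
    (hT : ∀ t ∈ T, G.Adj u t) : (G.induce (insert u T)).Connected := by
  have : Nonempty (insert u T : Set V) := ⟨⟨u, Set.mem_insert _ _⟩⟩
  have key : ∀ y : (insert u T : Set V),
      (G.induce (insert u T)).Reachable ⟨u, Set.mem_insert _ _⟩ y := by
    rintro ⟨y, rfl | hy⟩
    · exact .refl _
    · exact SimpleGraph.Adj.reachable (hT y hy)
  exact ⟨fun a b => (key a).symm.trans (key b)⟩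

theorem isMinorOf_of_injective {W V : Type} {H : SimpleGraph W} {G : SimpleGraph V} (f : W → V)
    (hf : Function.Injective f) (hadj : ∀ ⦃a b⦄, H.Adj a b → G.Adj (f a) (f b)) :
    IsMinorOf H G :=
  ⟨fun x => {f x}, fun _ => Set.singleton_nonempty _,
    fun _ _ h => Set.disjoint_singleton.2 (hf.ne h),
    fun x => connected_induce_singleton G (f x),
    fun _ _ h => ⟨_, rfl, _, rfl, hadj h⟩⟩

theorem IsMinorOf.refl {V : Type} (G : SimpleGraph V) : IsMinorOf G G :=
  isMinorOf_of_injective id Function.injective_id fun _ _ h => h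

theorem MemDHat.lt_degC {k : ℕ} {V : Type} [Fintype V] {G : SimpleGraph V} (hG : MemDHat k G)
    (v : V) : k + 1 ≤ degC G v := by
  obtain ⟨h, hp⟩ := hG
  unfold MemD at h
  push Not at h
  obtain ⟨W, _, H, hH, hlt⟩ := h
  by_cases hiso : Nonempty (H ≃g G)
  · obtain ⟨e⟩ := hiso
    have h1 := minDegC_le_degC H (e.symm v)
    have h2 : degC H (e.symm v) = degC G v := by
      classical
      unfold degC
      exact e.symm.degree_eq v
    omega
  · have := hp W H ⟨hH, hiso⟩ W H (IsMinorOf.refl H)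
    omega

theorem MemDHat.exists_degC_le {k : ℕ} {V W : Type} [Fintype W] [Nonempty W]
    {G : SimpleGraph V} {H : SimpleGraph W} (hG : MemDHat k G) (hH : IsProperMinorOf H G) :
    ∃ x, degC H x ≤ k := by
  obtain ⟨x, hx⟩ := exists_degC_eq_minDegC H
  exact ⟨x, hx ▸ hG.2 W H hH W H (IsMinorOf.refl H)⟩

theorem IsMinorOf.isProperMinorOf_of_card_lt {V W : Type} [Fintype V] [Fintype W]
    {G : SimpleGraph V} {H : SimpleGraph W} (hH : IsMinorOf H G)
    (hcard : Fintype.card W < Fintype.card V) : IsProperMinorOf H G :=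
  ⟨hH, fun ⟨e⟩ => hcard.ne (Fintype.card_congr e.toEquiv)⟩

theorem isProperMinorOf_deleteEdges {V : Type} [Fintype V] {G : SimpleGraph V} {a b : V}
    (hab : G.Adj a b) : IsProperMinorOf (G.deleteEdges {s(a, b)}) G := by
  classical
  refine ⟨isMinorOf_of_injective id Function.injective_id
    fun _ _ h => G.deleteEdges_le _ h, fun ⟨e⟩ => ?_⟩
  have hlt : G.deleteEdges {s(a, b)} < G := by
    refine lt_of_le_of_ne (G.deleteEdges_le _) fun h => ?_
    rw [← h] at hab
    simp at hab
  exact (Finset.card_lt_card (SimpleGraph.edgeFinset_strict_mono hlt)).ne e.card_edgeFinset_eq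

/-- In a member of `D̂_k`, the vertices of degree at least `k + 2` are independent. -/
theorem MemDHat.degC_eq_or_degC_eq {k : ℕ} {V : Type} [Fintype V] {G : SimpleGraph V}
    (hG : MemDHat k G) {a b : V} (hab : G.Adj a b) :
    degC G a = k + 1 ∨ degC G b = k + 1 := by
  have : Nonempty V := ⟨a⟩
  obtain ⟨x, hx⟩ := hG.exists_degC_le (isProperMinorOf_deleteEdges hab)
  have hmin := hG.lt_degC x
  have key : ∀ c, (∀ y, G.Adj x y → y ≠ c → (G.deleteEdges {s(a, b)}).Adj x y) →
      degC G x = k + 1 := by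
    intro c hc
    have h1 : (G.neighborSet x \ {c}).ncard ≤ degC (G.deleteEdges {s(a, b)}) x := by
      rw [degC_eq_ncard]
      exact Set.ncard_le_ncard (fun y hy => hc y hy.1 hy.2) (Set.toFinite _)
    have h2 := Set.ncard_le_ncard_sdiff_add_ncard (G.neighborSet x) {c} (Set.toFinite _)
    rw [← degC_eq_ncard, Set.ncard_singleton] at h2
    omega
  by_cases hxa : x = a
  · subst hxa
    left
    refine key b fun y hy hyb => ?_
    simp [SimpleGraph.deleteEdges_adj, hy]
    grind
  · right
    have : x = b := by
      by_contra hxb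
      have : G.neighborSet x ⊆ (G.deleteEdges {s(a, b)}).neighborSet x := by
        intro y hy
        simp [SimpleGraph.deleteEdges_adj] at hy ⊢
        grind
      have := Set.ncard_le_ncard this (Set.toFinite _)
      rw [← degC_eq_ncard, ← degC_eq_ncard] at this
      omega
    subst this
    refine key a fun y hy hya => ?_
    simp [SimpleGraph.deleteEdges_adj, hy]
    grind

/-- The graph obtained from `G` by contracting the set `insert u T` onto the vertex `u`. -/
def contractOnto {V : Type} (G : SimpleGraph V) (u : V) (T : Set V) :
    SimpleGraph {x // x ∉ T} where
  Adj a b := a ≠ b ∧ (G.Adj a b ∨ (a.1 = u ∧ ∃ t ∈ T, G.Adj t b) ∨ (b.1 = u ∧ ∃ t ∈ T, G.Adj t a))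
  symm := ⟨fun _ _ h => ⟨h.1.symm, h.2.elim (fun h => .inl h.symm) fun h => .inr h.symm⟩⟩
  loopless := ⟨fun _ h => h.1 rfl⟩

theorem isMinorOf_contractOnto {V : Type} {G : SimpleGraph V} {u : V} {T : Set V}
    (hT : ∀ t ∈ T, G.Adj u t) : IsMinorOf (contractOnto G u T) G := by
  classical
  refine ⟨fun x => if x.1 = u then insert u T else {x.1}, ?_, ?_, ?_, ?_⟩
  · intro x
    dsimp only
    split_ifs
    exacts [Set.insert_nonempty _ _, Set.singleton_nonempty _]
  · rintro ⟨x, hx⟩ ⟨y, hy⟩ hxy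
    rw [Set.disjoint_left]
    grind
  · intro x
    dsimp only
    by_cases h : x.1 = u
    · rw [if_pos h]
      exact connected_induce_insert hT
    · rw [if_neg h]
      exact connected_induce_singleton G _
  · have mem : ∀ x : {x // x ∉ T}, x.1 ∈ if x.1 = u then insert u T else {x.1} := by
      intro x
      split_ifs with h
      exacts [h ▸ Set.mem_insert _ _, rfl]
    rintro a b ⟨-, h | ⟨rfl, t, ht, h⟩ | ⟨rfl, t, ht, h⟩⟩
    · exact ⟨a, mem a, b, mem b, h⟩
    · exact ⟨t, by simp [ht], b, mem b, h⟩
    · exact ⟨a, mem a, t, by simp [ht], h.symm⟩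

/-- Contracting a nonempty star in a member of `D̂_k` leaves a vertex of degree at most `k`. -/
theorem MemDHat.exists_degC_contractOnto_le {k : ℕ} {V : Type} [Fintype V] {G : SimpleGraph V}
    (hG : MemDHat k G) {u : V} {T : Set V} [Fintype {x // x ∉ T}]
    (hT : ∀ t ∈ T, G.Adj u t) (hne : T.Nonempty) :
    ∃ x, degC (contractOnto G u T) x ≤ k := by
  have : Nonempty {x // x ∉ T} := ⟨⟨u, fun h => G.irrefl (hT u h)⟩⟩
  obtain ⟨t, ht⟩ := hne
  exact hG.exists_degC_le ((isMinorOf_contractOnto hT).isProperMinorOf_of_card_lt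
    (Fintype.card_subtype_lt (x := t) (by simpa using ht)))

theorem degC_lt_card {V : Type} [Fintype V] (G : SimpleGraph V) (v : V) :
    degC G v < Fintype.card V := by
  classical
  exact G.degree_lt_card_verts v

/-- A member of `D̂_1` cannot properly contain a triangle. -/
theorem MemDHat.degC_le_two_of_triangle {V : Type} [Fintype V] {G : SimpleGraph V}
    (hG : MemDHat 1 G) {u v w : V} (huv : G.Adj u v) (huw : G.Adj u w) (hvw : G.Adj v w) :
    degC G u ≤ 2 := by
  by_contra! hu
  have hadj : ∀ ⦃a b : Fin 3⦄, (⊤ : SimpleGraph (Fin 3)).Adj a b →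
      G.Adj (![u, v, w] a) (![u, v, w] b) := by
    intro a b hab
    fin_cases a <;> fin_cases b <;> simp_all [SimpleGraph.adj_comm]
  have hinj : Function.Injective ![u, v, w] := fun a b h => by
    by_contra hne
    exact (hadj (a := a) (b := b) hne).ne h
  have hcard : Fintype.card (Fin 3) < Fintype.card V := by
    have := degC_lt_card G u
    simp only [Fintype.card_fin]
    omega
  obtain ⟨x, hx⟩ := hG.exists_degC_le
    ((isMinorOf_of_injective _ hinj hadj).isProperMinorOf_of_card_lt hcard)
  have : degC (⊤ : SimpleGraph (Fin 3)) x = 2 := by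
    rw [degC_eq_ncard, SimpleGraph.neighborSet_top, Set.ncard_compl]
    simp
  omega

/-- Either an edge of a member of `D̂_k` has a common neighbour of degree `k + 1`, or its ends
have the same `k` further neighbours. -/
theorem MemDHat.low_common_neighbour_or_twins {k : ℕ} {V : Type} [Fintype V] {G : SimpleGraph V}
    (hG : MemDHat k G) {v w : V} (hvw : G.Adj v w) :
    (∃ x, G.Adj x v ∧ G.Adj x w ∧ degC G x = k + 1) ∨
      (G.neighborSet v \ {w} = G.neighborSet w \ {v} ∧ (G.neighborSet v \ {w}).ncard = k) := by
  classical
  have hne := hvw.ne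
  obtain ⟨⟨x, hxw⟩, hx⟩ := hG.exists_degC_contractOnto_le (u := v) (T := {w})
    (by rintro t rfl; exact hvw) (Set.singleton_nonempty w)
  have bound : ∀ A : Set V, (∀ y ∈ A, y ≠ w ∧ x ≠ y ∧
      (G.Adj x y ∨ (x = v ∧ G.Adj w y) ∨ (y = v ∧ G.Adj w x))) → A.ncard ≤ k := by
    intro A hA
    refine (ncard_le_degC _ _ A fun y hy => ?_).trans hx
    obtain ⟨h1, h2, h3⟩ := hA y hy
    exact ⟨h1, fun h => h2 (congrArg Subtype.val h), by simpa using h3⟩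
  have hmin := hG.lt_degC x
  by_cases hxv : x = v
  · subst hxv
    right
    have hminw := hG.lt_degC w
    rw [degC_eq_ncard] at hmin hminw
    have h1 := Set.ncard_sdiff_singleton_add_one (s := G.neighborSet x) (a := w) hvw
      (Set.toFinite _)
    have h2 := Set.ncard_sdiff_singleton_add_one (s := G.neighborSet w) (a := x) hvw.symm
      (Set.toFinite _)
    have h3 : ((G.neighborSet x \ {w}) ∪ (G.neighborSet w \ {x})).ncard ≤ k := by
      refine bound _ ?_
      rintro y (⟨hy, hyw⟩ | ⟨hy, hyw⟩)
      · exact ⟨hyw, hy.ne, .inl hy⟩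
      · exact ⟨hy.ne', fun h => hyw h.symm, .inr (.inl ⟨rfl, hy⟩)⟩
    have e1 := Set.eq_of_subset_of_ncard_le
      (Set.subset_union_left (s := G.neighborSet x \ {w}) (t := G.neighborSet w \ {x}))
      (by omega) (Set.toFinite _)
    have e2 := Set.eq_of_subset_of_ncard_le
      (Set.subset_union_right (s := G.neighborSet x \ {w}) (t := G.neighborSet w \ {x}))
      (by omega) (Set.toFinite _)
    refine ⟨e1.trans e2.symm, ?_⟩
    rw [← e1] at h3
    omega
  · left
    rw [degC_eq_ncard] at hmin
    have hadjw : G.Adj x w := by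
      by_contra hcon
      have := bound (G.neighborSet x) fun y hy =>
        ⟨fun h => hcon (h ▸ hy), SimpleGraph.Adj.ne hy, .inl hy⟩
      omega
    have h1 := Set.ncard_sdiff_singleton_add_one (s := G.neighborSet x) (a := w) hadjw
      (Set.toFinite _)
    have h2 := bound (G.neighborSet x \ {w}) fun y hy =>
      ⟨hy.2, SimpleGraph.Adj.ne hy.1, .inl hy.1⟩
    refine ⟨x, ?_, hadjw, by rw [degC_eq_ncard]; omega⟩
    by_contra hcon
    have h3 := bound (insert v (G.neighborSet x \ {w})) <| by
      rintro y (rfl | hy)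
      · exact ⟨hne, hxv, .inr (.inr ⟨rfl, hadjw.symm⟩)⟩
      · exact ⟨hy.2, SimpleGraph.Adj.ne hy.1, .inl hy.1⟩
    rw [Set.ncard_insert_of_notMem (fun h => hcon h.1) (Set.toFinite _)] at h3
    omega

/-- If the ends of an edge have the same `k ≥ 2` further neighbours, one of these has
degree `k + 1`. -/
theorem MemDHat.exists_low_of_twins {k : ℕ} (hk : 2 ≤ k) {V : Type} [Fintype V]
    {G : SimpleGraph V} (hG : MemDHat k G) {v w : V} (hvw : G.Adj v w)
    (htwin : G.neighborSet v \ {w} = G.neighborSet w \ {v})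
    (hcard : (G.neighborSet v \ {w}).ncard = k) :
    ∃ x ∈ G.neighborSet v \ {w}, degC G x = k + 1 := by
  classical
  by_contra! hhigh
  set S := G.neighborSet v \ {w} with hS
  have hdeg : ∀ x ∈ S, k + 2 ≤ degC G x := fun x hx => by
    have := hG.lt_degC x
    have := hhigh x hx
    omega
  have hindep : ∀ x ∈ S, ∀ y ∈ S, ¬ G.Adj x y := fun x hx y hy h =>
    (hG.degC_eq_or_degC_eq h).elim (hhigh x hx) (hhigh y hy)
  have hSv : ∀ x ∈ S, G.Adj v x := fun x hx => hx.1
  have hSw : ∀ x ∈ S, G.Adj w x := fun x hx => by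
    rw [htwin] at hx
    exact hx.1
  have hvS : ∀ x, x ≠ w → G.Adj v x → x ∈ S := fun x h h' => ⟨h', h⟩
  have hwS : ∀ x, x ≠ v → G.Adj w x → x ∈ S := fun x h h' => by
    rw [htwin]
    exact ⟨h', h⟩
  obtain ⟨u, hu⟩ : S.Nonempty := by
    rw [← Set.ncard_pos (Set.toFinite _)]
    omega
  obtain ⟨⟨x, hxT⟩, hx⟩ := hG.exists_degC_contractOnto_le (u := u) (T := {v, w})
    (by
      rintro t (rfl | rfl)
      exacts [(hSv u hu).symm, (hSw u hu).symm])
    (Set.insert_nonempty _ _)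
  obtain ⟨hxv, hxw⟩ : x ≠ v ∧ x ≠ w := by simpa using hxT
  have bound : ∀ A : Set V, (∀ y ∈ A, y ≠ v ∧ y ≠ w ∧ x ≠ y ∧
      (G.Adj x y ∨ (x = u ∧ G.Adj v y) ∨ (y = u ∧ G.Adj v x))) → A.ncard ≤ k := by
    intro A hA
    refine (ncard_le_degC _ _ A fun y hy => ?_).trans hx
    obtain ⟨h1, h2, h3, h4⟩ := hA y hy
    refine ⟨by simp [h1, h2], fun h => h3 (congrArg Subtype.val h), ?_⟩
    rcases h4 with h | ⟨h, h'⟩ | ⟨h, h'⟩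
    exacts [.inl h, .inr (.inl ⟨h, v, by simp, h'⟩), .inr (.inr ⟨h, v, by simp, h'⟩)]
  have hrest : (G.neighborSet x).ncard ≤ (G.neighborSet x \ {v, w}).ncard + 2 := by
    have h1 := Set.ncard_le_ncard_sdiff_add_ncard (G.neighborSet x) {v, w} (Set.toFinite _)
    rwa [Set.ncard_pair hvw.ne] at h1
  have hmem : ∀ y ∈ G.neighborSet x \ {v, w}, y ≠ v ∧ y ≠ w ∧ x ≠ y ∧
      (G.Adj x y ∨ (x = u ∧ G.Adj v y) ∨ (y = u ∧ G.Adj v x)) := by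
    rintro y ⟨hy, hy'⟩
    simp only [Set.mem_insert_iff, Set.mem_singleton_iff, not_or] at hy'
    exact ⟨hy'.1, hy'.2, SimpleGraph.Adj.ne hy, .inl hy⟩
  have hmin := hG.lt_degC x
  by_cases hxS : x ∈ S
  · have hdx := hdeg x hxS
    rw [degC_eq_ncard] at hdx
    by_cases hxu : x = u
    · subst hxu
      have h1 := bound ((G.neighborSet x \ {v, w}) ∪ (S \ {x})) <| by
        rintro y (hy | ⟨hy, hyx⟩)
        · exact hmem y hy
        · exact ⟨(hSv y hy).ne', (hSw y hy).ne', fun h => hyx h.symm, .inr (.inl ⟨rfl, hSv y hy⟩)⟩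
      rw [Set.ncard_union_eq
        (Set.disjoint_left.2 fun y hy hy' => hindep x hxS y hy'.1 hy.1)
        (Set.toFinite _) (Set.toFinite _)] at h1
      have h2 := Set.ncard_sdiff_singleton_add_one hxS (Set.toFinite _)
      omega
    · have h1 := bound (insert u (G.neighborSet x \ {v, w})) <| by
        rintro y (rfl | hy)
        · exact ⟨(hSv y hu).ne', (hSw y hu).ne', hxu, .inr (.inr ⟨rfl, hSv x hxS⟩)⟩
        · exact hmem y hy
      rw [Set.ncard_insert_of_notMem (fun h => hindep x hxS u hu h.1) (Set.toFinite _)] at h1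
      omega
  · have h1 := bound (G.neighborSet x) fun y hy =>
      ⟨fun h => hxS (hvS x hxw (h ▸ hy.symm)), fun h => hxS (hwS x hxv (h ▸ hy.symm)),
        SimpleGraph.Adj.ne hy, .inl hy⟩
    rw [degC_eq_ncard] at hmin
    omega

/-- Proposition 4.3: for `k ≥ 1` and `G ∈ D̂_k`, every edge `vw` of `G` has a
low-degree common neighbour: a vertex `x`, distinct from `v` and `w`, adjacent
to both, whose degree equals the minimum degree `k+1` of `G`. -/
theorem memDHat_edge_has_low_degree_common_neighbour (k : ℕ) (hk : 1 ≤ k)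
    {V : Type} [Fintype V] (G : SimpleGraph V) (hG : MemDHat k G)
    (v w : V) (hvw : G.Adj v w) :
    ∃ x : V, x ≠ v ∧ x ≠ w ∧ G.Adj x v ∧ G.Adj x w ∧ degC G x = k + 1 := by
  suffices h : ∃ x, G.Adj x v ∧ G.Adj x w ∧ degC G x = k + 1 by
    obtain ⟨x, hv, hw, hx⟩ := h
    exact ⟨x, hv.ne, hw.ne, hv, hw, hx⟩
  rcases hG.low_common_neighbour_or_twins hvw with h | ⟨htwin, hcard⟩
  · exact h
  have hcommon : ∀ x ∈ G.neighborSet v \ {w}, G.Adj x v ∧ G.Adj x w := fun x hx =>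
    ⟨hx.1.symm, (htwin ▸ hx : x ∈ G.neighborSet w \ {v}).1.symm⟩
  rcases hk.eq_or_lt with rfl | hk
  · obtain ⟨x, hx⟩ : (G.neighborSet v \ {w}).Nonempty := by
      rw [← Set.ncard_pos (Set.toFinite _)]
      omega
    obtain ⟨hv, hw⟩ := hcommon x hx
    exact ⟨x, hv, hw, (hG.degC_le_two_of_triangle hv hw hvw).antisymm (hG.lt_degC x)⟩
  · obtain ⟨x, hx, hlow⟩ := hG.exists_low_of_twins hk hvw htwin hcard
    exact ⟨x, (hcommon x hx).1, (hcommon x hx).2, hlow⟩
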